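/- arXiv:2502.14591 — 4 statements merged into one kernel-verified Lean document; each statement's English description precedes it below -/
import Mathlib

section
/- Let T ∈ ℝ^{n×n×r} be a third-order tensor. The block circulant unfolding ψ(T) ∈ ℝ^{nr×nr} is invertible if and only if every Fourier block T̂_j ∈ ℂ^{n×n}, j = 0,…,r−1, is invertible; and in that case the inverse matrix ψ(T)^{−1} is itself block circulant, i.e., there exists a tensor T^{−1} ∈ ℝ^{n×n×r} with ψ(T^{−1}) = ψ(T)^{−1}. -/
/-!
STATEMENT 5: `ψ(T)` is invertible iff every Fourier block `T̂_j` is invertible; and in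
that case the inverse `ψ(T)⁻¹` is itself block circulant, i.e., there exists a tensor
`T⁻¹` with `ψ(T⁻¹) = ψ(T)⁻¹`.
-/

open Matrix

def psiBC {r : ℕ} {ι κ : Type*} (T : Fin r → Matrix ι κ ℝ) :
    Matrix (Fin r × ι) (Fin r × κ) ℝ :=
  fun p q => T (p.1 - q.1) p.2 q.2

noncomputable def fourierBlock {r : ℕ} {ι κ : Type*} (T : Fin r → Matrix ι κ ℝ) (j : Fin r) :
    Matrix ι κ ℂ :=
  ∑ k : Fin r,
    (Complex.exp (-(2 * Real.pi * Complex.I) / r)) ^ (j.val * k.val) • (T k).map Complex.ofReal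

/-!
A block circulant matrix over a finite group `G` is a convolution operator, so every character of
`G` turns it into multiplication by the corresponding Fourier block: the character table, tensored
with an identity, intertwines the circulant with the block diagonal matrix of its Fourier blocks.
Distinct characters are linearly independent (Dedekind), so when there are `|G|` of them the
intertwiner has nonzero determinant and the determinant of the circulant is the product
of those of its Fourier blocks.
The inverse is block circulant because being block circulant means being fixed by simultaneous
translation of rows and columns, and inversion commutes with permuting indices.
-/

section BlockCirculant

variable {G ι κ α : Type*}

/-- The block circulant matrix whose `(g, h)` block is `T (g - h)`, indexed by an arbitrary `G`;
`psiBC` is the case `G = Fin r` with real entries. -/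
def blockCirculant [Sub G] (T : G → Matrix ι κ α) : Matrix (G × ι) (G × κ) α :=
  comp G G ι κ α (circulant T)

theorem blockCirculant_apply [Sub G] (T : G → Matrix ι κ α) (p : G × ι) (q : G × κ) :
    blockCirculant T p q = T (p.1 - q.1) p.2 q.2 :=
  rfl

theorem blockCirculant_map {β : Type*} [Sub G] (T : G → Matrix ι κ α) (f : α → β) :
    (blockCirculant T).map f = blockCirculant fun g => (T g).map f :=
  rfl

/-- Translation by `g` of the block index of a block matrix, leaving the index inside the block
unchanged. -/
def blockTranslate [AddGroup G] (ι : Type*) (g : G) : G × ι ≃ G × ι :=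
  (Equiv.addRight g).prodCongr (Equiv.refl ι)

theorem blockTranslate_apply [AddGroup G] (g h : G) (a : ι) :
    blockTranslate ι g (h, a) = (h + g, a) :=
  rfl

theorem exists_blockCirculant_eq_iff [AddGroup G] {M : Matrix (G × ι) (G × κ) α} :
    (∃ T, blockCirculant T = M) ↔
      ∀ g, M.submatrix (blockTranslate ι g) (blockTranslate κ g) = M := by
  constructor
  · rintro ⟨T, rfl⟩ g
    ext ⟨h, a⟩ ⟨k, b⟩
    simp only [submatrix_apply, blockTranslate_apply, blockCirculant_apply,
      add_sub_add_right_eq_sub]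
  · intro hM
    refine ⟨fun g => of fun a b => M (g, a) (0, b), ?_⟩
    ext ⟨h, a⟩ ⟨k, b⟩
    calc M (h - k, a) (0, b)
        = M.submatrix (blockTranslate ι k) (blockTranslate κ k) (h - k, a) (0, b) := by rw [hM]
      _ = M (h, a) (k, b) := by
        simp only [submatrix_apply, blockTranslate_apply, sub_add_cancel, zero_add]

theorem exists_blockCirculant_eq_inv [AddGroup G] [Fintype G] [DecidableEq G] [Fintype ι]
    [DecidableEq ι] [CommRing α] (T : G → Matrix ι ι α) :
    ∃ S, blockCirculant S = (blockCirculant T)⁻¹ := by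
  refine exists_blockCirculant_eq_iff.2 fun g => ?_
  rw [← inv_submatrix_equiv, exists_blockCirculant_eq_iff.1 ⟨T, rfl⟩]

end BlockCirculant

section Characters

open scoped Kronecker

variable {G J ι κ K : Type*} [AddGroup G] [Fintype G] [CommRing K]

/-- The Fourier coefficient of the matrix-valued function `T` at the character `χ`, without
complex conjugation and without normalization. -/
def blockFourier (χ : AddChar G K) (T : G → Matrix ι κ K) : Matrix ι κ K :=
  ∑ g, χ g • T g

/-- The matrix of values of a family of characters, one row per character. -/
def charTable (χ : J → AddChar G K) : Matrix J G K :=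
  of fun j g => χ j g

theorem sum_char_smul_sub (χ : AddChar G K) (T : G → Matrix ι κ K) (h : G) :
    ∑ g, χ g • T (g - h) = χ h • blockFourier χ T := by
  calc ∑ g, χ g • T (g - h)
      = ∑ g, χ (g + h) • T g := by
        rw [← Equiv.sum_comp (Equiv.addRight h)]
        simp only [Equiv.coe_addRight, add_sub_cancel_right]
    _ = χ h • blockFourier χ T := by
        simp only [blockFourier, Finset.smul_sum, smul_smul, χ.map_add_eq_mul, mul_comm]

theorem charTable_kronecker_mul_blockCirculant [Fintype J] [DecidableEq J] [Fintype ι]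
    [DecidableEq ι] [Fintype κ] [DecidableEq κ] (χ : J → AddChar G K) (T : G → Matrix ι κ K) :
    charTable χ ⊗ₖ (1 : Matrix ι ι K) * blockCirculant T =
      comp J J ι κ K (diagonal fun j => blockFourier (χ j) T) *
        charTable χ ⊗ₖ (1 : Matrix κ κ K) := by
  ext ⟨j, a⟩ ⟨h, b⟩
  have left_entry : (charTable χ ⊗ₖ (1 : Matrix ι ι K) * blockCirculant T) (j, a) (h, b) =
      (∑ g, χ j g • T (g - h)) a b := by
    simp [mul_apply, Fintype.sum_prod_type, charTable, blockCirculant_apply, one_apply,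
      Matrix.sum_apply]
  have right_entry : (comp J J ι κ K (diagonal fun j => blockFourier (χ j) T) *
      charTable χ ⊗ₖ (1 : Matrix κ κ K)) (j, a) (h, b) = (χ j h • blockFourier (χ j) T) a b := by
    simp [mul_apply, Fintype.sum_prod_type, charTable, one_apply, diagonal_apply,
      Matrix.ite_apply, mul_comm]
  rw [left_entry, right_entry, sum_char_smul_sub]

theorem det_comp_diagonal [Fintype J] [DecidableEq J] [Fintype ι] [DecidableEq ι]
    (D : J → Matrix ι ι K) : (comp J J ι ι K (diagonal D)).det = ∏ j, (D j).det := by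
  rw [comp_diagonal, det_reindex_self, det_blockDiagonal]

variable [DecidableEq G] [IsDomain K] {χ : G → AddChar G K}

theorem det_charTable_ne_zero (hχ : Function.Injective χ) : (charTable χ).det ≠ 0 := by
  have rows_independent : LinearIndependent K (charTable χ).row :=
    (linearIndependent_monoidHom (Multiplicative G) K).comp (fun j => (χ j).toMonoidHom)
      (AddChar.toMonoidHomEquiv.injective.comp hχ)
  exact nonsingular_iff_det_ne_zero.1 (.of_linearIndependent_row rows_independent)

theorem det_blockCirculant [Fintype ι] [DecidableEq ι] (hχ : Function.Injective χ)
    (T : G → Matrix ι ι K) : (blockCirculant T).det = ∏ j, (blockFourier (χ j) T).det := by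
  have det_intertwiner_ne_zero : (charTable χ ⊗ₖ (1 : Matrix ι ι K)).det ≠ 0 := by
    rw [det_kronecker, det_one, one_pow, mul_one]
    exact pow_ne_zero _ (det_charTable_ne_zero hχ)
  refine mul_left_cancel₀ det_intertwiner_ne_zero ?_
  rw [← det_mul, charTable_kronecker_mul_blockCirculant, det_mul, det_comp_diagonal, mul_comm]

theorem psi_isUnit_iff_fourierBlocks_isUnit_general {R : Type*} [CommRing R] [Fintype ι]
    [DecidableEq ι] (f : R →+* K) [IsLocalHom f] (hχ : Function.Injective χ)
    (T : G → Matrix ι ι R) :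
    (IsUnit (blockCirculant T) ↔ ∀ j, IsUnit (blockFourier (χ j) fun g => (T g).map f)) ∧
      (IsUnit (blockCirculant T) → ∃ Tinv, blockCirculant Tinv = (blockCirculant T)⁻¹) := by
  refine ⟨?_, fun _ => exists_blockCirculant_eq_inv T⟩
  have map_det : f (blockCirculant T).det =
      ∏ j, (blockFourier (χ j) fun g => (T g).map f).det := by
    rw [f.map_det, RingHom.mapMatrix_apply, blockCirculant_map, det_blockCirculant hχ]
  simp only [isUnit_iff_isUnit_det]
  rw [← isUnit_map_iff f, map_det, IsUnit.prod_univ_iff]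

end Characters

section PowAddChar

variable {r : ℕ} [NeZero r] {M : Type*} [CommMonoid M] {ζ : M}

/-- The character `k ↦ ζ ^ (j * k)` of the cyclic group `Fin r`, for an `r`-th root of unity
`ζ`. -/
def powAddChar (hζ : ζ ^ r = 1) (j : Fin r) : AddChar (Fin r) M where
  toFun k := ζ ^ (j.val * k.val)
  map_zero_eq_one' := by rw [Fin.val_zero, mul_zero, pow_zero]
  map_add_eq_mul' k l := by
    have hζj : (ζ ^ j.val) ^ r = 1 := by rw [pow_right_comm, hζ, one_pow]
    simp only [pow_mul, Fin.val_add, ← pow_eq_pow_mod _ hζj, pow_add]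

theorem powAddChar_apply (hζ : ζ ^ r = 1) (j k : Fin r) :
    powAddChar hζ j k = ζ ^ (j.val * k.val) :=
  rfl

theorem powAddChar_apply_one (hζ : ζ ^ r = 1) (j : Fin r) : powAddChar hζ j 1 = ζ ^ j.val := by
  rw [powAddChar_apply, mul_comm, pow_mul, Fin.val_one', ← pow_eq_pow_mod _ hζ, pow_one]

theorem powAddChar_injective (hζ : IsPrimitiveRoot ζ r) :
    Function.Injective (powAddChar hζ.pow_eq_one) := by
  intro i j hij
  have pow_eq : ζ ^ i.val = ζ ^ j.val := by
    rw [← powAddChar_apply_one hζ.pow_eq_one, hij, powAddChar_apply_one]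
  exact Fin.ext (hζ.pow_inj i.isLt j.isLt pow_eq)

end PowAddChar

theorem isPrimitiveRoot_exp_neg (r : ℕ) [NeZero r] :
    IsPrimitiveRoot (Complex.exp (-(2 * Real.pi * Complex.I) / r)) r := by
  rw [neg_div, Complex.exp_neg]
  exact (Complex.isPrimitiveRoot_exp r (NeZero.ne r)).inv

theorem psiBC_eq_blockCirculant {r : ℕ} {ι κ : Type*} (T : Fin r → Matrix ι κ ℝ) :
    psiBC T = blockCirculant T :=
  rfl

theorem fourierBlock_eq_blockFourier {r : ℕ} [NeZero r] {ι κ : Type*}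
    (T : Fin r → Matrix ι κ ℝ) (j : Fin r) :
    fourierBlock T j = blockFourier (powAddChar (isPrimitiveRoot_exp_neg r).pow_eq_one j)
      fun k => (T k).map Complex.ofRealHom :=
  rfl

theorem psi_isUnit_iff_fourierBlocks_isUnit {n r : ℕ}
    (T : Fin r → Matrix (Fin n) (Fin n) ℝ) :
    (IsUnit (psiBC T) ↔ ∀ j : Fin r, IsUnit (fourierBlock T j)) ∧
      (IsUnit (psiBC T) →
        ∃ Tinv : Fin r → Matrix (Fin n) (Fin n) ℝ, psiBC Tinv = (psiBC T)⁻¹) := by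
  rcases eq_zero_or_neZero r with rfl | _
  · exact ⟨⟨fun _ j => j.elim0, fun _ => isUnit_of_subsingleton _⟩,
      fun _ => ⟨T, Subsingleton.elim _ _⟩⟩
  · simp only [psiBC_eq_blockCirculant, fourierBlock_eq_blockFourier]
    exact psi_isUnit_iff_fourierBlocks_isUnit_general Complex.ofRealHom
      (powAddChar_injective (isPrimitiveRoot_exp_neg r)) T
end

section
/- (Corollary 2) Suppose the consistent set Σ is nonempty. Then Σ is a singleton if and only if for every j = 0,…,r−1 the set of complex matrix pairs {(A,B) ∈ ℂ^{n×n} × ℂ^{n×m} : Ẑ_j = A Ŷ_j + B V̂_j} is a singleton, where Ŷ_j, Ẑ_j, V̂_j are the j-th Fourier blocks of the data tensors. -/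
/-!
STATEMENT 9 (Corollary 2): If the consistent set Σ is nonempty, then Σ is a singleton iff
for every `j` the set of complex pairs `(A,B)` with `Ẑ_j = A Ŷ_j + B V̂_j` is a singleton.
-/

open Matrix

def tProd {r : ℕ} {ι κ χ : Type*} [Fintype κ]
    (T : Fin r → Matrix ι κ ℝ) (S : Fin r → Matrix κ χ ℝ) :
    Fin r → Matrix ι χ ℝ :=
  fun k => ∑ j : Fin r, T (k - j) * S j

def consistentSet {n m q r : ℕ}
    (Y Z : Fin r → Matrix (Fin n) (Fin q) ℝ) (V : Fin r → Matrix (Fin m) (Fin q) ℝ) :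
    Set ((Fin r → Matrix (Fin n) (Fin n) ℝ) × (Fin r → Matrix (Fin n) (Fin m) ℝ)) :=
  {p | Z = tProd p.1 Y + tProd p.2 V}

/-!
Stack the unknowns as `X = [A B]` and the data as `W = [Y; V]`: the system reads `X ⋆ W = Z`. Its
unique solvability can be tested over `ℂ`: applying a linear functional `ℂ → ℝ` to the entries
commutes with `⋆ W` because `W` is real, so a functional fixing `1` sends complex solutions to real
ones, and since functionals separate points, a trivial real kernel forces a trivial complex kernel.
Over `ℂ` the discrete Fourier transform is a bijection that turns `X ⋆ W = Z` into the independent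
equations `X̂_j Ŵ_j = Ẑ_j`, and a product of solution sets is a singleton iff each factor is.
-/

open ZMod Function

section ExistsUnique

theorem existsUnique_map_eq_iff {E F : Type*} [AddGroup E] [AddZeroClass F] (f : E →+ F) (z : F) :
    (∃! x, f x = z) ↔ (∃ x, f x = z) ∧ Injective f := by
  constructor
  · rintro ⟨x, hx, x_unique⟩
    refine ⟨⟨x, hx⟩, (injective_iff_map_eq_zero f).2 fun d hd => ?_⟩
    exact add_eq_left.1 (x_unique (x + d) (by simp only [map_add, hx, hd, add_zero]))
  · rintro ⟨⟨x, hx⟩, f_inj⟩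
    exact ⟨x, hx, fun y hy => f_inj (hy.trans hx.symm)⟩

theorem existsUnique_forall_iff_forall_existsUnique {J : Type*} {α : J → Type*}
    {P : ∀ j, α j → Prop} : (∃! f : ∀ j, α j, ∀ j, P j (f j)) ↔ ∀ j, ∃! x, P j x := by
  classical
  constructor
  · rintro ⟨f, hf, f_unique⟩ j
    refine ⟨f j, hf j, fun x hx => ?_⟩
    have update_eq : update f j x = f :=
      f_unique _ ((forall_update_iff f P).2 ⟨hx, fun i _ => hf i⟩)
    simpa using congrFun update_eq j
  · intro h
    choose f hf f_unique using h
    exact ⟨f, hf, fun g hg => funext fun j => f_unique j (g j) (hg j)⟩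

end ExistsUnique

section CircularProduct

variable {G ι κ χ : Type*}

/-- Entrywise application of `f` to a tensor: extension of scalars when `f` is an algebra map, a
coordinate (such as the real part) when `f` is a linear functional. -/
def mapEntries {R S : Type*} (f : R → S) (T : G → Matrix ι κ R) : G → Matrix ι κ S :=
  fun k => (T k).map f

theorem mapEntries_algebraMap_injective {K L : Type*} [CommSemiring K] [Semiring L]
    [Algebra K L] [FaithfulSMul K L] :
    Injective (mapEntries (algebraMap K L) : (G → Matrix ι κ K) → G → Matrix ι κ L) :=
  (Matrix.map_injective (FaithfulSMul.algebraMap_injective K L)).comp_left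

variable [Fintype G] [Sub G] [Fintype κ]

/-- The T-product `X ↦ X ⋆ W` with a fixed right factor, as an additive map. The slices are indexed
by any finite type with a subtraction and have entries in any semiring, so that the real and the
complexified T-product, indexed by `Fin r` or `ZMod r`, are instances of it. -/
def circMulRight {R : Type*} [NonUnitalNonAssocSemiring R] (W : G → Matrix κ χ R) :
    (G → Matrix ι κ R) →+ (G → Matrix ι χ R) where
  toFun X k := ∑ j, X (k - j) * W j
  map_zero' := by
    funext k
    simp only [Pi.zero_apply, Matrix.zero_mul, Finset.sum_const_zero]
  map_add' X₁ X₂ := by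
    funext k
    simp only [Pi.add_apply, Matrix.add_mul, Finset.sum_add_distrib]

theorem circMulRight_apply {R : Type*} [NonUnitalNonAssocSemiring R] (W : G → Matrix κ χ R)
    (X : G → Matrix ι κ R) (k : G) : circMulRight W X k = ∑ j, X (k - j) * W j :=
  rfl

section Scalars

variable {K L : Type*} [CommSemiring K] [Semiring L] [Algebra K L]

theorem mapEntries_algebraMap_circMulRight (W : G → Matrix κ χ K) (X : G → Matrix ι κ K) :
    mapEntries (algebraMap K L) (circMulRight W X) =
      circMulRight (mapEntries (algebraMap K L) W) (mapEntries (algebraMap K L) X) := by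
  ext k a b
  simp [mapEntries, circMulRight_apply, Matrix.sum_apply, Matrix.mul_apply]

theorem mapEntries_dual_circMulRight (φ : Module.Dual K L) (W : G → Matrix κ χ K)
    (X : G → Matrix ι κ L) :
    mapEntries φ (circMulRight (mapEntries (algebraMap K L) W) X) =
      circMulRight W (mapEntries φ X) := by
  ext k a b
  simp [mapEntries, circMulRight_apply, Matrix.sum_apply, Matrix.mul_apply,
    ← Algebra.commutes, ← Algebra.smul_def, mul_comm]

end Scalars

section BaseChange

variable {K L : Type*} [Field K] [Ring L] [Algebra K L] [Nontrivial L]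

theorem exists_circMulRight_algebraMap_eq_iff (W : G → Matrix κ χ K) (Z : G → Matrix ι χ K) :
    (∃ X, circMulRight (mapEntries (algebraMap K L) W) X = mapEntries (algebraMap K L) Z) ↔
      ∃ X, circMulRight W X = Z := by
  constructor
  · rintro ⟨X, hX⟩
    obtain ⟨φ, hφ⟩ := (Algebra.linearMap K L).exists_leftInverse_of_injective
      (LinearMap.ker_eq_bot.2 (algebraMap K L).injective)
    refine ⟨mapEntries φ X, ?_⟩
    rw [← mapEntries_dual_circMulRight, hX]
    ext k a b
    exact LinearMap.congr_fun hφ (Z k a b)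
  · rintro ⟨X, rfl⟩
    exact ⟨_, (mapEntries_algebraMap_circMulRight W X).symm⟩

theorem circMulRight_algebraMap_injective_iff (W : G → Matrix κ χ K) :
    Injective (circMulRight (ι := ι) (mapEntries (algebraMap K L) W)) ↔
      Injective (circMulRight (ι := ι) W) := by
  constructor
  · intro h
    refine .of_comp (f := mapEntries (algebraMap K L)) ?_
    have h_comp := h.comp (mapEntries_algebraMap_injective (K := K) (L := L))
    simpa only [comp_def, mapEntries_algebraMap_circMulRight] using h_comp
  · refine fun h => (injective_iff_map_eq_zero _).2 fun X hX => ?_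
    have mapEntries_dual_eq_zero (φ : Module.Dual K L) : mapEntries φ X = 0 := by
      refine (injective_iff_map_eq_zero _).1 h _ ?_
      rw [← mapEntries_dual_circMulRight, hX]
      ext
      exact map_zero φ
    ext k a b
    exact (Module.forall_dual_apply_eq_zero_iff K _).1 fun φ =>
      congrFun (congrFun (congrFun (mapEntries_dual_eq_zero φ) k) a) b

theorem existsUnique_circMulRight_algebraMap_eq_iff (W : G → Matrix κ χ K) (Z : G → Matrix ι χ K) :
    (∃! X, circMulRight (mapEntries (algebraMap K L) W) X = mapEntries (algebraMap K L) Z) ↔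
      ∃! X, circMulRight W X = Z := by
  rw [existsUnique_map_eq_iff, existsUnique_map_eq_iff, exists_circMulRight_algebraMap_eq_iff,
    circMulRight_algebraMap_injective_iff]

end BaseChange

end CircularProduct

section Fourier

variable {ι κ χ : Type*}

theorem stdAddChar_neg_mul_eq_exp_pow {N : ℕ} [NeZero N] (k j : ZMod N) :
    stdAddChar (-(k * j)) =
      Complex.exp (-(2 * Real.pi * Complex.I) / N) ^ (j.val * k.val) := by
  have intCast_eq : ((-(j.val * k.val : ℕ) : ℤ) : ZMod N) = -(k * j) := by
    simp [mul_comm]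
  rw [← intCast_eq, stdAddChar_coe, ← Complex.exp_nat_mul]
  push_cast
  ring_nf

theorem fourierBlock_eq_dft {N : ℕ} (T : Fin (N + 1) → Matrix ι κ ℝ) (j : Fin (N + 1)) :
    fourierBlock T j = dft (N := N + 1) (mapEntries (algebraMap ℝ ℂ) T) j :=
  -- `ZMod (N + 1)` unfolds to `Fin (N + 1)`.
  Finset.sum_congr rfl fun k _ => congrArg (· • (T k).map Complex.ofReal)
    (stdAddChar_neg_mul_eq_exp_pow (N := N + 1) k j).symm

variable [Fintype κ]

theorem dft_circMulRight {N : ℕ} [NeZero N] (W : ZMod N → Matrix κ χ ℂ)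
    (X : ZMod N → Matrix ι κ ℂ) (j : ZMod N) : 𝓕 (circMulRight W X) j = 𝓕 X j * 𝓕 W j := by
  have dft_shift (l : ZMod N) :
      ∑ k, stdAddChar (-(k * j)) • X (k - l) = stdAddChar (-(l * j)) • 𝓕 X j := by
    rw [← Equiv.sum_comp (Equiv.addRight l)]
    simp only [Equiv.coe_addRight, add_sub_cancel_right, dft_apply, Finset.smul_sum, smul_smul,
      ← AddChar.map_add_eq_mul, add_mul, neg_add_rev]
  calc
    𝓕 (circMulRight W X) j = ∑ l, (∑ k, stdAddChar (-(k * j)) • X (k - l)) * W l := by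
      simp only [dft_apply, circMulRight_apply, Finset.smul_sum, Matrix.sum_mul, Matrix.smul_mul]
      exact Finset.sum_comm
    _ = ∑ l, 𝓕 X j * stdAddChar (-(l * j)) • W l := by
      simp only [dft_shift, Matrix.smul_mul, Matrix.mul_smul]
    _ = 𝓕 X j * 𝓕 W j := by rw [dft_apply W, Matrix.mul_sum]

theorem existsUnique_circMulRight_eq_iff_dft {N : ℕ} [NeZero N] (W : ZMod N → Matrix κ χ ℂ)
    (Z : ZMod N → Matrix ι χ ℂ) :
    (∃! X, circMulRight W X = Z) ↔ ∀ j, ∃! M : Matrix ι κ ℂ, M * 𝓕 W j = 𝓕 Z j := by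
  rw [← existsUnique_forall_iff_forall_existsUnique]
  refine (dft : (ZMod N → Matrix ι κ ℂ) ≃ₗ[ℂ] _).toEquiv.existsUnique_congr fun X => ?_
  rw [← dft.injective.eq_iff, funext_iff]
  simp only [dft_circMulRight, LinearEquiv.coe_toEquiv]

theorem existsUnique_tProd_eq_iff_fourierBlock {r : ℕ} (W : Fin r → Matrix κ χ ℝ)
    (Z : Fin r → Matrix ι χ ℝ) :
    (∃! X, tProd X W = Z) ↔ ∀ j, ∃! M : Matrix ι κ ℂ, M * fourierBlock W j = fourierBlock Z j := by
  cases r with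
  | zero => exact iff_of_true ⟨0, Subsingleton.elim _ _, fun _ _ => Subsingleton.elim _ _⟩ nofun
  | succ N =>
    simp only [fourierBlock_eq_dft]
    exact (existsUnique_circMulRight_algebraMap_eq_iff (L := ℂ) W Z).symm.trans
      (existsUnique_circMulRight_eq_iff_dft (N := N + 1) _ _)

end Fourier

section Stacking

variable {r : ℕ} {ι κ μ χ R : Type*}

/-- Placing two matrices side by side, as a bijection. It turns a pair of unknowns `(A, B)` into
the single unknown `[A B]`. -/
def fromColsEquiv : Matrix ι κ R × Matrix ι μ R ≃ Matrix ι (κ ⊕ μ) R where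
  toFun p := fromCols p.1 p.2
  invFun X := (X.toCols₁, X.toCols₂)
  left_inv p := by simp only [toCols₁_fromCols, toCols₂_fromCols]
  right_inv X := fromCols_toCols X

theorem fourierBlock_fromRows (Y : Fin r → Matrix κ χ ℝ) (V : Fin r → Matrix μ χ ℝ) (j : Fin r) :
    fourierBlock (fun k => fromRows (Y k) (V k)) j =
      fromRows (fourierBlock Y j) (fourierBlock V j) := by
  ext (a | a) b <;> simp [fourierBlock, Matrix.sum_apply]

theorem tProd_fromCols_fromRows [Fintype κ] [Fintype μ] (A : Fin r → Matrix ι κ ℝ)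
    (B : Fin r → Matrix ι μ ℝ) (Y : Fin r → Matrix κ χ ℝ) (V : Fin r → Matrix μ χ ℝ) :
    tProd (fun k => fromCols (A k) (B k)) (fun k => fromRows (Y k) (V k)) =
      tProd A Y + tProd B V := by
  funext k
  simp only [tProd, fromCols_mul_fromRows, Finset.sum_add_distrib, Pi.add_apply]

theorem existsUnique_eq_tProd_add_tProd_iff [Fintype κ] [Fintype μ] (Y : Fin r → Matrix κ χ ℝ)
    (V : Fin r → Matrix μ χ ℝ) (Z : Fin r → Matrix ι χ ℝ) :
    (∃! p : (Fin r → Matrix ι κ ℝ) × (Fin r → Matrix ι μ ℝ), Z = tProd p.1 Y + tProd p.2 V) ↔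
      ∃! X, tProd X (fun k => fromRows (Y k) (V k)) = Z :=
  ((Equiv.arrowProdEquivProdArrow _ _ _).symm.trans
    (Equiv.piCongrRight fun _ => fromColsEquiv)).existsUnique_congr fun p =>
      eq_comm.trans (by rw [← tProd_fromCols_fromRows]; rfl)

theorem existsUnique_eq_mul_add_mul_iff [Fintype κ] [Fintype μ] [Semiring R]
    (Y : Matrix κ χ R) (V : Matrix μ χ R) (Z : Matrix ι χ R) :
    (∃! p : Matrix ι κ R × Matrix ι μ R, Z = p.1 * Y + p.2 * V) ↔
      ∃! X : Matrix ι (κ ⊕ μ) R, X * fromRows Y V = Z :=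
  fromColsEquiv.existsUnique_congr fun p =>
    eq_comm.trans (by rw [← fromCols_mul_fromRows]; rfl)

end Stacking

theorem informative_sysId_iff_fourier_sysId_general {r : ℕ} {ι κ μ χ : Type*} [Fintype κ]
    [Fintype μ] (Y : Fin r → Matrix κ χ ℝ) (Z : Fin r → Matrix ι χ ℝ)
    (V : Fin r → Matrix μ χ ℝ) :
    (∃! p : (Fin r → Matrix ι κ ℝ) × (Fin r → Matrix ι μ ℝ), Z = tProd p.1 Y + tProd p.2 V) ↔
      ∀ j : Fin r, ∃! p : Matrix ι κ ℂ × Matrix ι μ ℂ,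
        fourierBlock Z j = p.1 * fourierBlock Y j + p.2 * fourierBlock V j := by
  simp only [existsUnique_eq_tProd_add_tProd_iff, existsUnique_eq_mul_add_mul_iff,
    existsUnique_tProd_eq_iff_fourierBlock, fourierBlock_fromRows]

theorem informative_sysId_iff_fourier_sysId {n m q r : ℕ}
    (Y Z : Fin r → Matrix (Fin n) (Fin q) ℝ) (V : Fin r → Matrix (Fin m) (Fin q) ℝ)
    (hne : (consistentSet Y Z V).Nonempty) :
    (∃! p, p ∈ consistentSet Y Z V) ↔
      ∀ j : Fin r,
        ∃! p : Matrix (Fin n) (Fin n) ℂ × Matrix (Fin n) (Fin m) ℂ,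
          fourierBlock Z j = p.1 * fourierBlock Y j + p.2 * fourierBlock V j :=
  informative_sysId_iff_fourier_sysId_general Y Z V
end

section
/- Let A, Q, P ∈ ℝ^{n×n×r}, B ∈ ℝ^{n×m×r}, R ∈ ℝ^{m×m×r} be third-order tensors, and assume for each j = 0,…,r−1 that R̂_j + B̂_j^* P̂_j B̂_j is invertible (where ^* denotes conjugate transpose). Then P solves the T-algebraic Riccati equation P = Aᵀ⋆P⋆A − Aᵀ⋆P⋆B⋆(R + Bᵀ⋆P⋆B)^{−1}⋆Bᵀ⋆P⋆A + Q if and only if for every j = 0,…,r−1 the Fourier block P̂_j solves the complex matrix algebraic Riccati equation P̂_j = Â_j^* P̂_j Â_j − Â_j^* P̂_j B̂_j (R̂_j + B̂_j^* P̂_j B̂_j)^{−1} B̂_j^* P̂_j Â_j + Q̂_j. -/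
/-!
STATEMENT 14: Assume each `R̂_j + B̂_j^* P̂_j B̂_j` is invertible.  Then `P` solves the
T-algebraic Riccati equation (T-inverse taken in the `ψ`-sense) iff every Fourier block
`P̂_j` solves the corresponding complex matrix algebraic Riccati equation.
-/

open Matrix

/-- The T-transpose: `(Tᵀ)_k = (T_{-k})ᵀ`, so that `ψ(Tᵀ) = ψ(T)ᵀ`. -/
def tTr {r : ℕ} {ι κ : Type*} (T : Fin r → Matrix ι κ ℝ) :
    Fin r → Matrix κ ι ℝ :=
  fun k => (T (-k))ᵀ

/-!
The Fourier transform turns the T-product into the blockwise matrix product and the T-transpose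
into the blockwise conjugate transpose, and it is injective, so an equation between tensors may be
checked block by block. If all Fourier blocks of `M` are invertible, then `S ↦ M ⋆ S` is an
injective endomorphism of a finite-dimensional real vector space, hence surjective; this gives a
*real* tensor `W` with `M ⋆ W = 1`, and `W` computes both `ψ(M)⁻¹` and every `M̂_j⁻¹`.
-/

section Character

variable {r : ℕ}

/-- The primitive `r`-th root of unity `ω = exp (-2πi / r)` underlying `fourierBlock`. For `r = 0`
the division returns `0` and the value is `1`. -/
noncomputable def fourierRoot (r : ℕ) : ℂ :=
  Complex.exp (-(2 * Real.pi * Complex.I) / r)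

lemma isPrimitiveRoot_fourierRoot [NeZero r] : IsPrimitiveRoot (fourierRoot r) r := by
  rw [fourierRoot, neg_div, Complex.exp_neg]
  exact (Complex.isPrimitiveRoot_exp r (NeZero.ne r)).inv

/-- The character `k ↦ ω ^ (j * k)` of the cyclic group `Fin r`, which weights the `k`-th slice in
the `j`-th Fourier block. -/
noncomputable def fourierChar [NeZero r] (j : Fin r) : AddChar (Fin r) ℂ where
  toFun k := fourierRoot r ^ (j.val * k.val)
  map_zero_eq_one' := by simp
  map_add_eq_mul' a b := by
    have root_pow : (fourierRoot r ^ j.val) ^ r = 1 := by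
      rw [pow_right_comm, isPrimitiveRoot_fourierRoot.pow_eq_one, one_pow]
    simp only [pow_mul, Fin.val_add, ← pow_add]
    exact (pow_eq_pow_mod _ root_pow).symm

lemma det_vandermonde_fourierRoot_ne_zero :
    (vandermonde fun j : Fin r => fourierRoot r ^ j.val).det ≠ 0 := by
  rw [det_vandermonde_ne_zero_iff]
  intro i j hij
  have : NeZero r := .of_pos i.pos
  exact Fin.ext (isPrimitiveRoot_fourierRoot.pow_inj i.isLt j.isLt hij)

end Character

section Tensor

variable {r : ℕ} {ι κ χ : Type*}

/-- The identity tensor of the T-product: its slice at index `0` is the identity matrix and its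
other slices vanish. The condition is on `k.val` so that `r = 0` is allowed. -/
def tOne (r : ℕ) (ι : Type*) [DecidableEq ι] : Fin r → Matrix ι ι ℝ :=
  fun k => if k.val = 0 then 1 else 0

/-- Left T-multiplication `S ↦ T ⋆ S` as a linear map of real vector spaces. -/
def tProdLeft (χ : Type*) [Fintype κ] (T : Fin r → Matrix ι κ ℝ) :
    (Fin r → Matrix κ χ ℝ) →ₗ[ℝ] (Fin r → Matrix ι χ ℝ) where
  toFun := tProd T
  map_add' S S' := by
    funext k
    simp [tProd, Matrix.mul_add, Finset.sum_add_distrib]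
  map_smul' c S := by
    funext k
    simp [tProd, Finset.smul_sum]

section BlockCirculant

lemma psiBC_injective :
    Function.Injective (psiBC : (Fin r → Matrix ι κ ℝ) → Matrix (Fin r × ι) (Fin r × κ) ℝ) := by
  intro T S h
  ext k a b
  have : NeZero r := .of_pos k.pos
  simpa [psiBC] using congr_fun₂ h (k, a) (0, b)

lemma psiBC_add (T S : Fin r → Matrix ι κ ℝ) : psiBC (T + S) = psiBC T + psiBC S :=
  rfl

lemma psiBC_tOne [DecidableEq ι] : psiBC (tOne r ι) = 1 := by
  ext ⟨i, a⟩ ⟨j, b⟩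
  have : NeZero r := .of_pos i.pos
  by_cases h : i = j <;> simp [psiBC, tOne, one_apply, sub_eq_zero, h]

lemma psiBC_tTr (T : Fin r → Matrix ι κ ℝ) : psiBC (tTr T) = (psiBC T)ᵀ := by
  ext ⟨i, a⟩ ⟨j, b⟩
  have : NeZero r := .of_pos i.pos
  simp [psiBC, tTr]

lemma psiBC_tProd [Fintype κ] (T : Fin r → Matrix ι κ ℝ) (S : Fin r → Matrix κ χ ℝ) :
    psiBC (tProd T S) = psiBC T * psiBC S := by
  ext ⟨i, a⟩ ⟨j, b⟩
  have : NeZero r := .of_pos i.pos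
  simp only [psiBC, tProd, Matrix.sum_apply, mul_apply, Fintype.sum_prod_type]
  rw [← Equiv.sum_comp (Equiv.subRight j)]
  simp

end BlockCirculant

section Fourier

lemma fourierBlock_eq_sum_fourierChar [NeZero r] (T : Fin r → Matrix ι κ ℝ) (j : Fin r) :
    fourierBlock T j = ∑ k, fourierChar j k • (T k).map Complex.ofReal :=
  rfl

lemma fourierBlock_apply_eq_mulVec (T : Fin r → Matrix ι κ ℝ) (j : Fin r) (a : ι) (b : κ) :
    fourierBlock T j a b =
      ((vandermonde fun j : Fin r => fourierRoot r ^ j.val) *ᵥ fun k => (T k a b : ℂ)) j := by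
  simp [fourierBlock, fourierRoot, Matrix.sum_apply, mulVec, dotProduct, pow_mul]

lemma fourierBlock_injective :
    Function.Injective (fourierBlock : (Fin r → Matrix ι κ ℝ) → Fin r → Matrix ι κ ℂ) := by
  intro T S h
  ext k a b
  have tube_eq : (fun k => (T k a b : ℂ)) = fun k => (S k a b : ℂ) := by
    refine mulVec_injective_of_isUnit
      ((isUnit_iff_isUnit_det _).2 det_vandermonde_fourierRoot_ne_zero.isUnit) (funext fun j => ?_)
    rw [← fourierBlock_apply_eq_mulVec, ← fourierBlock_apply_eq_mulVec, h]
  exact Complex.ofReal_injective (congr_fun tube_eq k)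

lemma fourierBlock_add (T S : Fin r → Matrix ι κ ℝ) (j : Fin r) :
    fourierBlock (T + S) j = fourierBlock T j + fourierBlock S j := by
  simp [fourierBlock, Matrix.map_add, Finset.sum_add_distrib]

lemma fourierBlock_sub (T S : Fin r → Matrix ι κ ℝ) (j : Fin r) :
    fourierBlock (T - S) j = fourierBlock T j - fourierBlock S j := by
  simp [fourierBlock, Matrix.map_sub, smul_sub, Finset.sum_sub_distrib]

lemma fourierBlock_tOne [DecidableEq ι] (j : Fin r) : fourierBlock (tOne r ι) j = 1 := by
  have : NeZero r := .of_pos j.pos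
  rw [fourierBlock_eq_sum_fourierChar, Finset.sum_eq_single 0]
  · simp [tOne]
  · intro k _ hk
    simp [tOne, hk]
  · simp

lemma fourierBlock_tTr (T : Fin r → Matrix ι κ ℝ) (j : Fin r) :
    fourierBlock (tTr T) j = (fourierBlock T j)ᴴ := by
  have : NeZero r := .of_pos j.pos
  simp only [fourierBlock_eq_sum_fourierChar, conjTranspose_sum, conjTranspose_smul]
  rw [← Equiv.sum_comp (Equiv.neg (Fin r))]
  refine Finset.sum_congr rfl fun k _ => ?_
  ext a b
  simp [tTr, AddChar.map_neg_eq_conj]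

lemma map_ofReal_tProd [Fintype κ] (T : Fin r → Matrix ι κ ℝ) (S : Fin r → Matrix κ χ ℝ)
    (k : Fin r) : (tProd T S k).map Complex.ofReal =
      ∑ l, (T (k - l)).map Complex.ofReal * (S l).map Complex.ofReal := by
  ext a b
  simp [tProd, Matrix.sum_apply, mul_apply]

lemma fourierBlock_tProd [Fintype κ] (T : Fin r → Matrix ι κ ℝ) (S : Fin r → Matrix κ χ ℝ)
    (j : Fin r) : fourierBlock (tProd T S) j = fourierBlock T j * fourierBlock S j := by
  have : NeZero r := .of_pos j.pos
  calc fourierBlock (tProd T S) j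
      = ∑ k, ∑ l, fourierChar j k •
          ((T (k - l)).map Complex.ofReal * (S l).map Complex.ofReal) := by
        simp only [fourierBlock_eq_sum_fourierChar, map_ofReal_tProd, Finset.smul_sum]
    _ = ∑ l, ∑ k, fourierChar j (k + l) •
          ((T k).map Complex.ofReal * (S l).map Complex.ofReal) := by
        rw [Finset.sum_comm]
        refine Finset.sum_congr rfl fun l _ => ?_
        rw [← Equiv.sum_comp (Equiv.addRight l)]
        simp
    _ = fourierBlock T j * fourierBlock S j := by
        simp only [fourierBlock_eq_sum_fourierChar, AddChar.map_add_eq_mul, Matrix.mul_sum,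
          Matrix.sum_mul, Matrix.smul_mul, Matrix.mul_smul, Finset.smul_sum, smul_smul, mul_comm]

end Fourier

section Inverse

variable [Fintype ι] [DecidableEq ι] {M W : Fin r → Matrix ι ι ℝ}

lemma tProdLeft_injective (hM : ∀ j, IsUnit (fourierBlock M j)) :
    Function.Injective (tProdLeft χ M) := by
  intro S S' h
  refine fourierBlock_injective (funext fun j => ?_)
  have blocks_eq : fourierBlock M j * fourierBlock S j = fourierBlock M j * fourierBlock S' j := by
    rw [← fourierBlock_tProd, ← fourierBlock_tProd]
    exact congr_fun (congr_arg fourierBlock h) j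
  have := (hM j).invertible
  exact Matrix.mul_right_injective_of_invertible (fourierBlock M j) blocks_eq

lemma exists_tProd_eq_tOne (hM : ∀ j, IsUnit (fourierBlock M j)) :
    ∃ W, tProd M W = tOne r ι :=
  LinearMap.injective_iff_surjective.1 (tProdLeft_injective hM) (tOne r ι)

lemma inv_psiBC_of_tProd_eq_tOne (h : tProd M W = tOne r ι) : (psiBC M)⁻¹ = psiBC W :=
  inv_eq_right_inv (by rw [← psiBC_tProd, h, psiBC_tOne])

lemma inv_fourierBlock_of_tProd_eq_tOne (h : tProd M W = tOne r ι) (j : Fin r) :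
    (fourierBlock M j)⁻¹ = fourierBlock W j :=
  inv_eq_right_inv (by rw [← fourierBlock_tProd, h, fourierBlock_tOne])

end Inverse

end Tensor

theorem tRiccati_iff_fourier_riccati_general {r : ℕ} {ι κ : Type*}
    [Fintype ι] [Fintype κ] [DecidableEq κ]
    (A Q P : Fin r → Matrix ι ι ℝ)
    (B : Fin r → Matrix ι κ ℝ) (R : Fin r → Matrix κ κ ℝ)
    (hInv : ∀ j : Fin r,
      IsUnit (fourierBlock R j + (fourierBlock B j)ᴴ * fourierBlock P j * fourierBlock B j)) :
    (∃ W : Fin r → Matrix κ κ ℝ,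
        psiBC W = (psiBC R + (psiBC B)ᵀ * psiBC P * psiBC B)⁻¹ ∧
        P = tProd (tTr A) (tProd P A)
            - tProd (tTr A) (tProd P (tProd B (tProd W (tProd (tTr B) (tProd P A))))) + Q) ↔
      ∀ j : Fin r,
        fourierBlock P j =
          (fourierBlock A j)ᴴ * fourierBlock P j * fourierBlock A j
            - (fourierBlock A j)ᴴ * fourierBlock P j * fourierBlock B j
              * (fourierBlock R j + (fourierBlock B j)ᴴ * fourierBlock P j * fourierBlock B j)⁻¹
              * ((fourierBlock B j)ᴴ * fourierBlock P j * fourierBlock A j)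
            + fourierBlock Q j := by
  have psiBC_weight : psiBC R + (psiBC B)ᵀ * psiBC P * psiBC B =
      psiBC (R + tProd (tProd (tTr B) P) B) := by
    simp only [psiBC_add, psiBC_tProd, psiBC_tTr]
  have fourierBlock_weight (j : Fin r) :
      fourierBlock R j + (fourierBlock B j)ᴴ * fourierBlock P j * fourierBlock B j =
        fourierBlock (R + tProd (tProd (tTr B) P) B) j := by
    simp only [fourierBlock_add, fourierBlock_tProd, fourierBlock_tTr]
  simp only [fourierBlock_weight] at hInv ⊢
  obtain ⟨W, hW⟩ := exists_tProd_eq_tOne hInv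
  simp only [psiBC_weight, inv_psiBC_of_tProd_eq_tOne hW, inv_fourierBlock_of_tProd_eq_tOne hW,
    psiBC_injective.eq_iff, exists_eq_left]
  rw [← fourierBlock_injective.eq_iff, funext_iff]
  simp only [fourierBlock_add, fourierBlock_sub, fourierBlock_tProd, fourierBlock_tTr,
    Matrix.mul_assoc]

theorem tRiccati_iff_fourier_riccati {n m r : ℕ}
    (A Q P : Fin r → Matrix (Fin n) (Fin n) ℝ)
    (B : Fin r → Matrix (Fin n) (Fin m) ℝ) (R : Fin r → Matrix (Fin m) (Fin m) ℝ)
    (hInv : ∀ j : Fin r,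
      IsUnit (fourierBlock R j + (fourierBlock B j)ᴴ * fourierBlock P j * fourierBlock B j)) :
    (∃ W : Fin r → Matrix (Fin m) (Fin m) ℝ,
        psiBC W = (psiBC R + (psiBC B)ᵀ * psiBC P * psiBC B)⁻¹ ∧
        P = tProd (tTr A) (tProd P A)
            - tProd (tTr A) (tProd P (tProd B (tProd W (tProd (tTr B) (tProd P A))))) + Q) ↔
      ∀ j : Fin r,
        fourierBlock P j =
          (fourierBlock A j)ᴴ * fourierBlock P j * fourierBlock A j
            - (fourierBlock A j)ᴴ * fourierBlock P j * fourierBlock B j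
              * (fourierBlock R j + (fourierBlock B j)ᴴ * fourierBlock P j * fourierBlock B j)⁻¹
              * ((fourierBlock B j)ᴴ * fourierBlock P j * fourierBlock A j)
            + fourierBlock Q j :=
  tRiccati_iff_fourier_riccati_general A Q P B R hInv
end

section
/- Let T ∈ ℝ^{n×n×r} be a third-order tensor whose block circulant unfolding ψ(T) is symmetric. Then the following are equivalent: (i) for every nonzero X ∈ ℝ^{n×1×r}, the first frontal slice of Xᵀ⋆T⋆X is strictly positive (T is T-positive definite); (ii) the matrix ψ(T) ∈ ℝ^{nr×nr} is positive definite. -/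
/-!
STATEMENT 16: For `T ∈ ℝ^{n×n×r}` with `ψ(T)` symmetric, T-positive definiteness
(the first frontal slice of `Xᵀ⋆T⋆X` is strictly positive for every nonzero
`X ∈ ℝ^{n×1×r}`) is equivalent to positive definiteness of the matrix `ψ(T)`.
-/

open Matrix

theorem posDef_iff_conjTranspose_mul_mul_pos {R m κ : Type*} [Ring R] [PartialOrder R]
    [StarRing R] [Fintype m] [Unique κ] {M : Matrix m m R} :
    M.PosDef ↔ M.IsHermitian ∧
      ∀ V : Matrix m κ R, V ≠ 0 → 0 < (Vᴴ * M * V) default default := by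
  have entry_eq_dotProduct (x : m → R) :
      ((replicateCol κ x)ᴴ * M * replicateCol κ x) default default = star x ⬝ᵥ (M *ᵥ x) := by
    rw [Matrix.mul_assoc, ← replicateCol_mulVec, conjTranspose_replicateCol,
      replicateRow_mul_replicateCol_apply]
  have replicateCol_surjective : Function.Surjective (replicateCol κ : (m → R) → Matrix m κ R) :=
    fun V => ⟨fun i => V i default, by ext i j; rw [Unique.eq_default j, replicateCol_apply]⟩
  simp only [posDef_iff_dotProduct_mulVec, replicateCol_surjective.forall, ne_eq,
    replicateCol_eq_zero, entry_eq_dotProduct]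

section Unfolding

variable {r : ℕ} {ι κ χ : Type*}

/-- The unfolding of a tensor into the block column of its frontal slices `T_0, …, T_{r-1}`,
i.e. the first block column of `psiBC T`. It turns T-products into matrix products. -/
def tUnfold : (Fin r → Matrix ι κ ℝ) ≃+ Matrix (Fin r × ι) κ ℝ where
  toFun T := of fun p b => T p.1 p.2 b
  invFun A k := of fun a b => A (k, a) b
  map_add' _ _ := rfl

theorem tUnfold_apply (T : Fin r → Matrix ι κ ℝ) (p : Fin r × ι) (b : κ) :
    tUnfold T p b = T p.1 p.2 b :=
  rfl

theorem tUnfold_tProd [Fintype κ] (T : Fin r → Matrix ι κ ℝ) (S : Fin r → Matrix κ χ ℝ) :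
    tUnfold (tProd T S) = psiBC T * tUnfold S := by
  ext p c
  simp only [tUnfold_apply, tProd, psiBC, Matrix.sum_apply, mul_apply, Fintype.sum_prod_type]

theorem tProd_tTr_apply_zero [NeZero r] [Fintype ι]
    (X : Fin r → Matrix ι κ ℝ) (Y : Fin r → Matrix ι χ ℝ) :
    tProd (tTr X) Y 0 = (tUnfold X)ᵀ * tUnfold Y := by
  ext b c
  simp only [tUnfold_apply, tProd, tTr, zero_sub, neg_neg, Matrix.sum_apply, mul_apply,
    transpose_apply, Fintype.sum_prod_type]

theorem tProd_tTr_tProd_apply_zero [NeZero r] [Fintype ι]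
    (T : Fin r → Matrix ι ι ℝ) (X : Fin r → Matrix ι κ ℝ) :
    tProd (tTr X) (tProd T X) 0 = (tUnfold X)ᵀ * psiBC T * tUnfold X := by
  rw [tProd_tTr_apply_zero, tUnfold_tProd, Matrix.mul_assoc]

theorem tPosDef_iff_psi_posDef_general [NeZero r] [Fintype ι] [Unique κ]
    (T : Fin r → Matrix ι ι ℝ) :
    ((psiBC T).IsSymm ∧ ∀ X : Fin r → Matrix ι κ ℝ, X ≠ 0 →
        0 < (tProd (tTr X) (tProd T X)) 0 default default) ↔
      (psiBC T).PosDef := by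
  simp only [posDef_iff_conjTranspose_mul_mul_pos (κ := κ), isHermitian_iff_isSymm,
    conjTranspose_eq_transpose_of_trivial, tUnfold.surjective.forall,
    EmbeddingLike.map_ne_zero_iff, tProd_tTr_tProd_apply_zero]

end Unfolding

theorem tPosDef_iff_psi_posDef {r n : ℕ} [NeZero r]
    (T : Fin r → Matrix (Fin n) (Fin n) ℝ) (hsymm : (psiBC T).IsSymm) :
    (∀ X : Fin r → Matrix (Fin n) (Fin 1) ℝ, X ≠ 0 →
        0 < (tProd (tTr X) (tProd T X)) 0 0 0) ↔
      (psiBC T).PosDef :=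
  (and_iff_right hsymm).symm.trans (tPosDef_iff_psi_posDef_general T)
end
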